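/- Let q = p^f be a power of a prime p, let k > 0 and d ≥ 0. Then U_d(k) is empty if and only if d > L_k. -/

import Mathlib

/-!
Write `q = p ^ f`, let `D` be the sequence of base-`p` digits of `k`, and let
`W i = ∑ j, D j * p ^ ((i + j) % f)`.  For `i < f` this is the base-`q` digit sum of `k * p ^ i`
(`digits_sum_eq_W`), and `W i ≡ p ^ i * k` modulo `q - 1` (`W_modEq`).

If `k = m_0 + ⋯ + m_d` without carrying, then `W` is additive in the `m_s`, and each `m_s` with
`s > 0` contributes a positive multiple of `q - 1`; so `W i ≥ d * (q - 1)` for every `i`, that is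
`d ≤ L_k`.

Conversely suppose `W i ≥ d * (q - 1)` for all `i`.  Parts are split off `D` one at a time
(`split_step`).  The sequence `W` is `f`-periodic and satisfies
`W (i + 1) + (q - 1) * n i = p * W i`, where `n i` is the sum of the digits `D j` over the class
`i + j ≡ -1` modulo `f`.  Hence parts `e ≤ D` with value divisible by `q - 1` correspond to
`f`-periodic sequences `w` of natural numbers with `0 ≤ p * w i - w (i + 1) ≤ n i`, through
`W_e i = (q - 1) * w i`.  The greedy recursion `u (t + 1) = max 1 (p * u t - n t)`, `u 0 = 1`,
respects these bounds as well as `(q - 1) * (u t + (d - 1)) ≤ W t`; it satisfies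
`u t ≤ u (t + f)` and is bounded, so it becomes periodic, and its periodic tail gives a part whose
removal leaves all digit sums at least `(d - 1) * (q - 1)`.
-/

open Polynomial

open scoped Classical

/-- The monic polynomial `X^d + c_{d-1} X^{d-1} + ... + c_0` determined by its lower
coefficients `c : Fin d → F`; these parametrize the monic polynomials of degree `d`. -/
noncomputable def monicPoly (F : Type) [Field F] (d : ℕ) (c : Fin d → F) : F[X] :=
  X ^ d + ∑ i : Fin d, C (c i) * X ^ (i : ℕ)

/-- `S_d(-k) = Σ_{a monic of degree d} a^k`. -/
noncomputable def powerSum (F : Type) [Field F] [Fintype F] (d k : ℕ) : F[X] :=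
  ∑ c : Fin d → F, monicPoly F d c ^ k

/-- `S̃_d(-k) = Σ_{a monic of degree d, v ∤ a} a^k`. -/
noncomputable def rPowerSum (F : Type) [Field F] [Fintype F] (v : F[X]) (d k : ℕ) : F[X] :=
  ∑ c : Fin d → F, if v ∣ monicPoly F d c then 0 else monicPoly F d c ^ k

/-- `∑ i, m i = k` with no carrying of base-`p` digits. -/
def NoCarry (p : ℕ) {n : ℕ} (m : Fin n → ℕ) (k : ℕ) : Prop :=
  (∑ i, m i = k) ∧
    ∀ j : ℕ, (∑ i, (Nat.digits p (m i)).getD j 0) = (Nat.digits p k).getD j 0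

/-- `U_d(k)`. -/
def Uset (p q d k : ℕ) : Set (Fin (d + 1) → ℕ) :=
  {m | NoCarry p m k ∧ ∀ i : Fin (d + 1), 0 < (i : ℕ) → 0 < m i ∧ (q - 1) ∣ m i}

/-- `V_d(k)`. -/
def Vset (p q d k : ℕ) : Set (Fin (d + 1) → ℕ) :=
  {m | m ∈ Uset p q d k ∧ 0 < m 0}

/-- `W_d(k)`, the index set for the restricted power sum at `v = t`. -/
def Wset (p q d k : ℕ) : Set (Fin (d + 1) → ℕ) :=
  {m | NoCarry p m k ∧
      (∀ i : Fin (d + 1), 0 < (i : ℕ) → (i : ℕ) < d → 0 < m i ∧ (q - 1) ∣ m i) ∧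
      (q - 1) ∣ m (Fin.last d)}

/-- the weight `d·m_0 + (d-1)·m_1 + ⋯ + 1·m_{d-1}`. -/
def wt {d : ℕ} (m : Fin (d + 1) → ℕ) : ℕ := ∑ i : Fin (d + 1), (d - (i : ℕ)) * m i

/-- `L_k = min_{0 ≤ i ≤ f-1} l(k·p^i)/(q-1)` where `l` is the base-`q` digit sum. -/
noncomputable def Lval (q p f k : ℕ) : ℚ :=
  (Finset.Icc 0 (f - 1)).inf' ⟨0, by simp⟩
    (fun i => ((Nat.digits q (k * p ^ i)).sum : ℚ) / ((q : ℚ) - 1))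

/-- the `v`-adic multiple zeta value at negative integers `s_1, …, s_r`. -/
noncomputable def zetaV (F : Type) [Field F] [Fintype F] (v : F[X]) {r : ℕ}
    (s : Fin r → ℤ) : F[X] :=
  ∑ᶠ d ∈ {d : Fin r → ℕ | StrictAnti d}, ∏ i, rPowerSum F v (d i) (-(s i)).toNat

/-- the multiple zeta value at negative integers `s_1, …, s_r`. -/
noncomputable def zetaMZV (F : Type) [Field F] [Fintype F] {r : ℕ} (s : Fin r → ℤ) : F[X] :=
  ∑ᶠ d ∈ {d : Fin r → ℕ | StrictAnti d}, ∏ i, powerSum F (d i) (-(s i)).toNat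

/-- the trivial-zero condition for a prime of degree `e`. -/
def TrivialZeroCond (q p f : ℕ) {r : ℕ} (s : Fin r → ℤ) (e : ℕ) : Prop :=
  (∃ i : Fin r, s i < 0 ∧
      Lval q p f (-(s i)).toNat + (e : ℚ) < ((r - 1 - (i : ℕ) : ℕ) : ℚ)) ∨
  (∃ i j : Fin r, j < i ∧ s i < 0 ∧ s j < 0 ∧
      (r - 1 - (i : ℕ) : ℕ) < e ∧
      Lval q p f (-(s i)).toNat < ((r - 1 - (i : ℕ) : ℕ) : ℚ) ∧
      Lval q p f (-(s j)).toNat < (((i : ℕ) - (j : ℕ) : ℕ) : ℚ))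

/-- The digit sum `∑_{j < N} D j * p ^ ((i + j) % f)`: when `D` lists the base-`p` digits of `n`
and `i < f`, this is the base-`p ^ f` digit sum of `n * p ^ i`. -/
def W (p f N : ℕ) (D : ℕ → ℕ) (i : ℕ) : ℕ := ∑ j ∈ Finset.range N, D j * p ^ ((i + j) % f)

/-- The sum of the digits `D j` that are multiplied by `p ^ (f - 1)` in `W p f N D i`. -/
def classSum (f N : ℕ) (D : ℕ → ℕ) (i : ℕ) : ℕ :=
  ∑ j ∈ Finset.range N with (i + j) % f = f - 1, D j

/-- The number with base-`p` digits `D j`, `j < N`. -/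
def val (p N : ℕ) (D : ℕ → ℕ) : ℕ := ∑ j ∈ Finset.range N, D j * p ^ j

/-! ### Digit sums in base `p ^ f` -/

lemma digits_sum_add_mul {q : ℕ} (hq : 1 < q) (s b : ℕ) (hs : s < q) :
    (Nat.digits q (s + q * b)).sum = s + (Nat.digits q b).sum := by
  by_cases h : s = 0 ∧ b = 0
  · simp [h.1, h.2]
  · rw [Nat.digits_add q hq s b hs (by omega)]
    simp

lemma digits_sum_mul_pow {p f : ℕ} (hp : 1 < p) (hf : 0 < f) (n i : ℕ) (hi : i < f) :
    (Nat.digits (p ^ f) (n * p ^ i)).sum =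
      n % p * p ^ i + (Nat.digits (p ^ f) (n / p * p ^ (i + 1))).sum := by
  obtain ⟨g, rfl⟩ := Nat.exists_eq_add_of_lt hi
  have hq : 1 < p ^ (i + g + 1) := Nat.one_lt_pow (by omega) hp
  have hqe : p ^ (i + g + 1) = p ^ (i + 1) * p ^ g := by rw [← pow_add]; congr 1; omega
  have hn := Nat.mod_add_div n p
  have hA := Nat.mod_add_div (n / p) (p ^ g)
  have hr : n % p < p := Nat.mod_lt _ (by omega)
  have hc : n / p % p ^ g < p ^ g := Nat.mod_lt _ (by positivity)
  set r := n % p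
  set A := n / p
  set c := A % p ^ g
  set b := A / p ^ g
  have hlt : r * p ^ i + c * p ^ (i + 1) < p ^ (i + g + 1) := by
    calc r * p ^ i + c * p ^ (i + 1) < p * p ^ i + c * p ^ (i + 1) := by gcongr
      _ = (c + 1) * p ^ (i + 1) := by ring
      _ ≤ p ^ g * p ^ (i + 1) := by gcongr; omega
      _ = _ := by rw [hqe, mul_comm]
  have h1 : n * p ^ i = (r * p ^ i + c * p ^ (i + 1)) + p ^ (i + g + 1) * b := by
    rw [← hn, ← hA, hqe]; ring
  have h2 : A * p ^ (i + 1) = c * p ^ (i + 1) + p ^ (i + g + 1) * b := by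
    rw [hqe]; nth_rewrite 1 [← hA]; ring
  rw [h1, h2, digits_sum_add_mul hq _ _ hlt, digits_sum_add_mul hq _ _ (by omega), add_assoc]

lemma digits_sum_eq_W {p f : ℕ} (hp : 1 < p) (hf : 0 < f) (N : ℕ) :
    ∀ n i, n < p ^ N → i < f →
      (Nat.digits (p ^ f) (n * p ^ i)).sum = W p f N (fun j => (Nat.digits p n).getD j 0) i := by
  have hp2 : 2 ≤ p := hp
  simp only [W, Nat.getD_digits _ _ hp2]
  induction N with
  | zero => intro n i hn hi; simp at hn; simp [hn]
  | succ N ih =>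
    intro n i hn hi
    have hn' : n / p < p ^ N := by
      rw [Nat.div_lt_iff_lt_mul (by omega)]; rwa [pow_succ] at hn
    rw [digits_sum_mul_pow hp hf n i hi, Finset.sum_range_succ', add_comm]
    congr 1
    · rcases Nat.lt_or_ge (i + 1) f with h | h
      · rw [ih _ _ hn' h]
        refine Finset.sum_congr rfl fun j _ => ?_
        rw [Nat.div_div_eq_div_mul, ← pow_succ', show i + 1 + j = i + (j + 1) by ring]
      · have hif : i + 1 = f := by omega
        have h0 := digits_sum_add_mul (Nat.one_lt_pow (by omega) hp : 1 < p ^ f) 0 (n / p)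
          (by positivity)
        rw [zero_add, zero_add, mul_comm] at h0
        have h1 := ih _ 0 hn' hf
        rw [pow_zero, mul_one] at h1
        rw [hif, h0, h1]
        refine Finset.sum_congr rfl fun j _ => ?_
        rw [Nat.div_div_eq_div_mul, ← pow_succ', show i + (j + 1) = j + f by omega]
        simp
    · simp [Nat.mod_eq_of_lt hi]

/-! ### Numbers from digit sequences -/

lemma val_succ (p N : ℕ) (D : ℕ → ℕ) :
    val p (N + 1) D = D 0 + p * val p N (fun j => D (j + 1)) := by
  rw [val, Finset.sum_range_succ', val, Finset.mul_sum, add_comm]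
  congr 1
  · simp
  · exact Finset.sum_congr rfl fun j _ => by ring

lemma val_div_mod {p : ℕ} (N : ℕ) :
    ∀ (D : ℕ → ℕ), (∀ j, D j < p) → (∀ j, N ≤ j → D j = 0) →
      ∀ j, val p N D / p ^ j % p = D j := by
  induction N with
  | zero => intro D _ h0 j; simp [val, h0 j]
  | succ N ih =>
    intro D hD h0 j
    have hp : 0 < p := (Nat.zero_le _).trans_lt (hD 0)
    rw [val_succ]
    cases j with
    | zero => simp [Nat.mod_eq_of_lt (hD 0)]
    | succ j =>
      rw [pow_succ', ← Nat.div_div_eq_div_mul, Nat.add_mul_div_left _ _ hp,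
        Nat.div_eq_of_lt (hD 0), zero_add]
      exact ih _ (fun j => hD _) (fun j hj => h0 _ (by omega)) j

lemma val_digits {p : ℕ} (hp : 1 < p) (N : ℕ) :
    ∀ n, n < p ^ N → val p N (fun j => (Nat.digits p n).getD j 0) = n := by
  have hp2 : 2 ≤ p := hp
  simp only [Nat.getD_digits _ _ hp2]
  induction N with
  | zero => intro n hn; simp at hn; simp [val, hn]
  | succ N ih =>
    intro n hn
    have hn' : n / p < p ^ N := by
      rw [Nat.div_lt_iff_lt_mul (by omega)]; rwa [pow_succ] at hn
    have h := ih _ hn'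
    simp only [Nat.div_div_eq_div_mul, ← pow_succ'] at h
    rw [val_succ, h]
    simpa using Nat.mod_add_div n p

/-! ### Properties of `W` -/

lemma W_add_period (p f N : ℕ) (D : ℕ → ℕ) (i : ℕ) : W p f N D (i + f) = W p f N D i := by
  refine Finset.sum_congr rfl fun j _ => ?_
  rw [show i + f + j = i + j + f by ring, Nat.add_mod_right]

lemma W_mod (p f N : ℕ) (D : ℕ → ℕ) (i : ℕ) : W p f N D (i % f) = W p f N D i := by
  simp [W]

lemma W_sum {ι : Type*} (s : Finset ι) (p f N : ℕ) (D : ι → ℕ → ℕ) (i : ℕ) :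
    W p f N (fun j => ∑ x ∈ s, D x j) i = ∑ x ∈ s, W p f N (D x) i := by
  simp only [W, Finset.sum_mul]
  exact Finset.sum_comm

lemma W_modEq {p f : ℕ} (hp : 1 < p) (N : ℕ) (D : ℕ → ℕ) (i : ℕ) :
    W p f N D i ≡ p ^ i * val p N D [MOD p ^ f - 1] := by
  have h1 : p ^ f ≡ 1 [MOD p ^ f - 1] :=
    ((Nat.modEq_iff_dvd' (Nat.one_le_pow _ _ (by omega))).2 dvd_rfl).symm
  rw [W, val, Finset.mul_sum]
  refine Nat.ModEq.sum fun j _ => ?_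
  have h2 : p ^ (i + j) ≡ p ^ ((i + j) % f) [MOD p ^ f - 1] := by
    conv_lhs => rw [← Nat.mod_add_div (i + j) f, pow_add, pow_mul]
    simpa using (h1.pow ((i + j) / f)).mul_left (p ^ ((i + j) % f))
  calc D j * p ^ ((i + j) % f) ≡ D j * p ^ (i + j) [MOD p ^ f - 1] := (h2.mul_left _).symm
    _ = p ^ i * (D j * p ^ j) := by ring

lemma W_pos {p f N : ℕ} (hp : 1 < p) (D : ℕ → ℕ) (i : ℕ) (h : 0 < val p N D) :
    0 < W p f N D i := by
  obtain ⟨j, hj, hne⟩ := Finset.exists_ne_zero_of_sum_ne_zero h.ne'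
  refine lt_of_lt_of_le ?_ (Finset.single_le_sum (fun _ _ => Nat.zero_le _) hj)
  have : 0 < D j := Nat.pos_of_ne_zero fun h0 => hne (by simp [h0])
  positivity

lemma W_succ {p f : ℕ} (hp : 1 < p) (hf : 0 < f) (N : ℕ) (D : ℕ → ℕ) (i : ℕ) :
    W p f N D (i + 1) + (p ^ f - 1) * classSum f N D i = p * W p f N D i := by
  rw [W, W, classSum, Finset.sum_filter, Finset.mul_sum, Finset.mul_sum, ← Finset.sum_add_distrib]
  refine Finset.sum_congr rfl fun j _ => ?_
  have hlt := Nat.mod_lt (i + j) hf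
  have hpf : 1 ≤ p ^ f := Nat.one_le_pow _ _ (by omega)
  rw [show i + 1 + j = i + j + 1 by ring]
  split_ifs with h
  · have h0 : (i + j + 1) % f = 0 := by
      rw [← Nat.mod_add_mod, h, Nat.sub_add_cancel hf, Nat.mod_self]
    have hpp : p * p ^ (f - 1) = p ^ f := by rw [← pow_succ', Nat.sub_add_cancel hf]
    rw [h0, h]
    calc D j * p ^ 0 + (p ^ f - 1) * D j = ((p ^ f - 1) + 1) * D j := by ring
      _ = p * p ^ (f - 1) * D j := by rw [Nat.sub_add_cancel hpf, hpp]
      _ = _ := by ring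
  · have h0 : (i + j + 1) % f = (i + j) % f + 1 := by
      rw [← Nat.mod_add_mod, Nat.mod_eq_of_lt (by omega)]
    rw [h0]; ring

lemma classSum_mod (f N : ℕ) (D : ℕ → ℕ) (i : ℕ) : classSum f N D (i % f) = classSum f N D i := by
  simp [classSum]

/-! ### Splitting off one part -/

/-- A sum of natural numbers can be lowered termwise to any smaller value. -/
lemma exists_le_sum_eq {ι : Type*} [DecidableEq ι] (s : Finset ι) (D : ι → ℕ) :
    ∀ a ≤ ∑ j ∈ s, D j, ∃ e : ι → ℕ, (∀ j, e j ≤ D j) ∧ ∑ j ∈ s, e j = a := by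
  induction s using Finset.induction_on with
  | empty => intro a ha; exact ⟨D, fun _ => le_rfl, by simp at ha; simp [ha]⟩
  | insert x s hx ih =>
    intro a ha
    rw [Finset.sum_insert hx] at ha
    obtain ⟨e, he, hs⟩ := ih (a - min a (D x)) (by omega)
    refine ⟨Function.update e x (min a (D x)), fun j => ?_, ?_⟩
    · by_cases h : j = x
      · subst h; simp
      · simpa [h] using he j
    · rw [Finset.sum_insert hx, Finset.sum_update_of_notMem hx, hs]
      simp

/-- Any `f`-periodic `a` bounded by the class sums of `D` is the sequence of class sums of some
`e ≤ D`. -/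
lemma exists_classSum_eq {f : ℕ} (hf : 0 < f) (N : ℕ) (D a : ℕ → ℕ)
    (ha : ∀ i, a i ≤ classSum f N D i) (hper : ∀ i, a (i % f) = a i) :
    ∃ e : ℕ → ℕ, (∀ j, e j ≤ D j) ∧ ∀ i, classSum f N e i = a i := by
  choose E hE hs using fun i => exists_le_sum_eq _ D (a i) (ha i)
  refine ⟨fun j => E (f - 1 - j % f) j, fun j => hE _ _, fun i => ?_⟩
  rw [← classSum_mod, ← hper, ← hs (i % f), classSum]
  refine Finset.sum_congr rfl fun j hj => ?_
  have h := (Finset.mem_filter.1 hj).2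
  have h1 := Nat.mod_lt i hf
  have h2 := Nat.mod_lt j hf
  -- `i % f + j % f < 2 * f` is congruent to `f - 1`, so it equals `f - 1`.
  have : f - 1 - j % f = i % f := by
    rw [← Nat.add_mod_mod] at h
    rcases Nat.lt_or_ge (i % f + j % f) f with h3 | h3
    · rw [Nat.mod_eq_of_lt h3] at h; omega
    · rw [Nat.mod_eq_sub_mod h3, Nat.mod_eq_of_lt (by omega)] at h; omega
  simp only [this]

/-- The greedy recursion `u (t + 1) = max 1 (p * u t - n t)`, started at `1`. -/
def greedy (p : ℕ) (n : ℕ → ℕ) : ℕ → ℕ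
  | 0 => 1
  | t + 1 => max 1 (p * greedy p n t - n t)

lemma greedy_pos (p : ℕ) (n : ℕ → ℕ) (t : ℕ) : 1 ≤ greedy p n t := by
  cases t <;> simp [greedy]

lemma greedy_le_add {f : ℕ} (p : ℕ) (n : ℕ → ℕ) (hn : ∀ i, n (i + f) = n i) (t : ℕ) :
    greedy p n t ≤ greedy p n (t + f) := by
  induction t with
  | zero => exact greedy_pos _ _ _
  | succ t ih =>
    rw [show t + 1 + f = t + f + 1 by ring, greedy, greedy, hn]
    gcongr

/-- If `V` satisfies the recursion of `W_succ` (with `Q` for `q - 1`) and is everywhere at least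
`(c + 1) * Q`, then removing `Q` times the greedy sequence leaves at least `c * Q`. -/
lemma greedy_le {p Q c : ℕ} (hp : 1 < p) (V n : ℕ → ℕ) (hV : ∀ i, V (i + 1) + Q * n i = p * V i)
    (h : ∀ i, (c + 1) * Q ≤ V i) (t : ℕ) : (c + greedy p n t) * Q ≤ V t := by
  induction t with
  | zero => exact h 0
  | succ t ih =>
    rw [greedy]
    rcases le_total (p * greedy p n t - n t) 1 with h1 | h1
    · rw [max_eq_left h1]; exact h _
    · rw [max_eq_right h1]
      have h2 := hV t
      obtain ⟨x, hx⟩ := Nat.exists_eq_add_of_le (show n t ≤ p * greedy p n t by omega)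
      rw [hx, Nat.add_sub_cancel_left]
      have h3 : p * ((c + greedy p n t) * Q) ≤ p * V t := by gcongr
      have h4 : p * ((c + greedy p n t) * Q) = p * c * Q + (n t + x) * Q := by rw [← hx]; ring
      have h5 : c * Q ≤ p * c * Q := by gcongr; nlinarith
      nlinarith

lemma exists_eq_succ_of_monotone_bdd (g : ℕ → ℕ) (B : ℕ) (hg : ∀ s, g s ≤ g (s + 1))
    (hB : ∀ s, g s ≤ B) : ∃ s, g (s + 1) = g s := by
  by_contra! hne
  have : ∀ s, s ≤ g s := by
    intro s
    induction s with
    | zero => omega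
    | succ s ih => have := hg s; have := hne s; omega
  have := this (B + 1)
  have := hB (B + 1)
  omega

/-- If all digit sums of `D` are at least `(c + 1) * (q - 1)`, a nonempty part with value
divisible by `q - 1` can be removed so that all digit sums stay at least `c * (q - 1)`. -/
lemma split_step {p f : ℕ} (hp : 1 < p) (hf : 0 < f) (N c : ℕ) (D : ℕ → ℕ)
    (h : ∀ i, (c + 1) * (p ^ f - 1) ≤ W p f N D i) :
    ∃ e : ℕ → ℕ, (∀ j, e j ≤ D j) ∧ 0 < W p f N e 0 ∧ (p ^ f - 1) ∣ W p f N e 0 ∧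
      ∀ i, c * (p ^ f - 1) ≤ W p f N (fun j => D j - e j) i := by
  have hQ : 0 < p ^ f - 1 := by
    have := Nat.one_lt_pow hf.ne' hp; omega
  set n := classSum f N D with hn
  have hnper : ∀ i, n (i + f) = n i := fun i => by
    rw [hn, ← classSum_mod, Nat.add_mod_right, classSum_mod]
  have hle := greedy_le hp (W p f N D) n (W_succ hp hf N D) h
  have hmono : ∀ s, greedy p n (s * f) ≤ greedy p n ((s + 1) * f) := fun s => by
    rw [add_mul, one_mul]; exact greedy_le_add p n hnper _
  have hbd : ∀ s, greedy p n (s * f) ≤ W p f N D 0 := fun s => by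
    have h1 := hle (s * f)
    rw [← W_mod, Nat.mul_mod_left] at h1
    nlinarith
  obtain ⟨s, hs⟩ := exists_eq_succ_of_monotone_bdd (fun s => greedy p n (s * f)) _ hmono hbd
  have hnadd : ∀ i, n (s * f + i) = n i := fun i => by
    rw [hn, ← classSum_mod, Nat.mul_add_mod_self_right, classSum_mod]
  -- `w` is the periodic tail of the greedy sequence.
  obtain ⟨w, hw⟩ : ∃ w : ℕ → ℕ, ∀ i, w i = greedy p n (s * f + i) := ⟨_, fun _ => rfl⟩
  have hw1 : ∀ i, w (i + 1) = max 1 (p * w i - n i) := fun i => by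
    rw [hw, hw, ← add_assoc, greedy, hnadd]
  have hwpos : ∀ i, 1 ≤ w i := fun i => by rw [hw]; exact greedy_pos _ _ _
  have hwper : ∀ i, w (i + f) = w i := by
    intro i
    induction i with
    | zero => rw [hw, hw, zero_add, add_zero, ← hs, add_mul, one_mul]
    | succ i ih => rw [show i + 1 + f = i + f + 1 by ring, hw1, hw1, ih, hnper]
  have hwle : ∀ i, w (i + 1) ≤ p * w i := fun i => by
    have := hwpos i
    have : 1 ≤ p * w i := Nat.one_le_iff_ne_zero.2 (by positivity)
    rw [hw1]; omega
  obtain ⟨e, he, hea⟩ := exists_classSum_eq hf N D (fun i => p * w i - w (i + 1))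
    (fun i => by have := hw1 i; change _ ≤ n i; omega)
    (fun i => by
      have hP : Function.Periodic (fun i => p * w i - w (i + 1)) f := fun i => by
        simp only [show i + f + 1 = i + 1 + f by ring, hwper]
      exact hP.map_mod_nat i)
  have hWe := W_succ hp hf N e
  simp only [hea] at hWe
  -- Both `W e` and `(q - 1) * w` satisfy the same recursion, so their difference scales by `p`;
  -- periodicity forces it to vanish.
  have hdiff : ∀ i, ((W p f N e i : ℤ) - (p ^ f - 1 : ℕ) * w i) =
      p ^ i * ((W p f N e 0 : ℤ) - (p ^ f - 1 : ℕ) * w 0) := by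
    intro i
    induction i with
    | zero => simp
    | succ i ih =>
      have h1 := hWe i
      have h2 := hwle i
      zify [h2] at h1
      rw [pow_succ', mul_assoc, ← ih]
      linear_combination h1
  have hzero : ((W p f N e 0 : ℤ) - (p ^ f - 1 : ℕ) * w 0) = 0 := by
    have h1 := hdiff f
    have h2 := W_add_period p f N e 0
    have h3 := hwper 0
    rw [zero_add] at h2 h3
    rw [h2, h3] at h1
    have h4 : (1 : ℤ) < p ^ f := by exact_mod_cast Nat.one_lt_pow hf.ne' hp
    by_contra hne
    have : (p ^ f : ℤ) = 1 := by
      apply mul_right_cancel₀ hne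
      rw [one_mul]; exact h1.symm
    omega
  have hWw : ∀ i, W p f N e i = (p ^ f - 1) * w i := fun i => by
    have h1 := hdiff i
    rw [hzero, mul_zero] at h1
    have : (W p f N e i : ℤ) = (p ^ f - 1 : ℕ) * w i := by linarith
    exact_mod_cast this
  refine ⟨e, he, ?_, ⟨_, hWw 0⟩, fun i => ?_⟩
  · rw [hWw]; exact Nat.mul_pos hQ (hwpos 0)
  · have hadd : W p f N (fun j => D j - e j) i + W p f N e i = W p f N D i := by
      rw [W, W, W, ← Finset.sum_add_distrib]
      refine Finset.sum_congr rfl fun j _ => ?_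
      rw [← add_mul, Nat.sub_add_cancel (he j)]
    have h1 := hle (s * f + i)
    rw [← hw, ← W_mod, Nat.mul_add_mod_self_right, W_mod] at h1
    rw [hWw] at hadd
    nlinarith

lemma exists_split {p f : ℕ} (hp : 1 < p) (hf : 0 < f) (N d : ℕ) :
    ∀ D : ℕ → ℕ, (∀ i, d * (p ^ f - 1) ≤ W p f N D i) →
      ∃ e : Fin (d + 1) → ℕ → ℕ, (∀ j, ∑ s, e s j = D j) ∧
        ∀ s : Fin (d + 1), 0 < (s : ℕ) →
          0 < W p f N (e s) 0 ∧ (p ^ f - 1) ∣ W p f N (e s) 0 := by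
  induction d with
  | zero =>
    intro D _
    exact ⟨fun _ => D, by simp, fun s hs => by omega⟩
  | succ d ih =>
    intro D hD
    obtain ⟨a, hle, hpos, hdvd, hrest⟩ := split_step hp hf N d D hD
    obtain ⟨e, hsum, he⟩ := ih _ hrest
    refine ⟨Fin.snoc e a, fun j => ?_, fun s => ?_⟩
    · rw [Fin.sum_univ_castSucc]
      simp only [Fin.snoc_castSucc, Fin.snoc_last, hsum]
      exact Nat.sub_add_cancel (hle j)
    · refine Fin.lastCases ?_ (fun s => ?_) s
      · intro _; simpa using ⟨hpos, hdvd⟩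
      · intro hs; simpa using he s (by simpa using hs)

/-! ### Comparison of `U_d(k)` with the digit sums -/

lemma le_W_of_mem {p f d k : ℕ} (hp : 1 < p) (N : ℕ) (hN : k < p ^ N)
    (m : Fin (d + 1) → ℕ) (hm : m ∈ Uset p (p ^ f) d k) (i : ℕ) :
    d * (p ^ f - 1) ≤ W p f N (fun j => (Nat.digits p k).getD j 0) i := by
  obtain ⟨⟨hsum, hdig⟩, hpos⟩ := hm
  simp only [← hdig]
  rw [W_sum, Fin.sum_univ_succ]
  refine le_add_left ?_
  have hterm : ∀ s : Fin d,
      p ^ f - 1 ≤ W p f N (fun j => (Nat.digits p (m s.succ)).getD j 0) i := by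
    intro s
    obtain ⟨h0, hd⟩ := hpos s.succ (by simp)
    have hlt : m s.succ < p ^ N := by
      refine lt_of_le_of_lt ?_ hN
      rw [← hsum]
      exact Finset.single_le_sum (fun _ _ => Nat.zero_le _) (Finset.mem_univ _)
    have hv := val_digits hp N _ hlt
    refine Nat.le_of_dvd (W_pos hp _ _ (by rw [hv]; exact h0)) ?_
    rw [(W_modEq hp N _ i).dvd_iff dvd_rfl, hv]
    exact hd.mul_left _
  calc d * (p ^ f - 1) = ∑ _s : Fin d, (p ^ f - 1) := by simp
    _ ≤ _ := Finset.sum_le_sum fun s _ => hterm s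

lemma exists_mem_of_le_W {p f d k : ℕ} (hp : 1 < p) (hf : 0 < f) (N : ℕ) (hN : k < p ^ N)
    (h : ∀ i, d * (p ^ f - 1) ≤ W p f N (fun j => (Nat.digits p k).getD j 0) i) :
    ∃ m, m ∈ Uset p (p ^ f) d k := by
  have hp2 : 2 ≤ p := hp
  obtain ⟨e, hsum, he⟩ := exists_split hp hf N d _ h
  have hle : ∀ s j, e s j ≤ (Nat.digits p k).getD j 0 := fun s j => by
    rw [← hsum]
    exact Finset.single_le_sum (f := fun s => e s j) (fun _ _ => Nat.zero_le _) (Finset.mem_univ _)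
  have hlt : ∀ s j, e s j < p := fun s j => by
    refine (hle s j).trans_lt ?_
    rw [Nat.getD_digits _ _ hp2]
    exact Nat.mod_lt _ (by omega)
  have hzero : ∀ s j, N ≤ j → e s j = 0 := fun s j hj => by
    have h1 := hle s j
    rw [Nat.getD_digits _ _ hp2,
      Nat.div_eq_of_lt (hN.trans_le (Nat.pow_le_pow_right (by omega) hj))] at h1
    simpa using h1
  refine ⟨fun s => val p N (e s), ⟨?_, fun j => ?_⟩, fun s hs => ?_⟩
  · conv_rhs => rw [← val_digits hp N k hN]
    simp only [val, ← hsum, Finset.sum_mul]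
    exact Finset.sum_comm
  · rw [← hsum]
    refine Finset.sum_congr rfl fun s _ => ?_
    rw [Nat.getD_digits _ _ hp2, val_div_mod N _ (hlt s) (hzero s)]
  · obtain ⟨h0, hd⟩ := he s hs
    refine ⟨?_, ?_⟩
    · obtain ⟨j, hj, hne⟩ := Finset.exists_ne_zero_of_sum_ne_zero h0.ne'
      refine lt_of_lt_of_le ?_ (Finset.single_le_sum (fun _ _ => Nat.zero_le _) hj)
      have : 0 < e s j := Nat.pos_of_ne_zero fun h0 => hne (by simp [h0])
      positivity
    · rw [(W_modEq hp N _ 0).dvd_iff dvd_rfl] at hd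
      simpa using hd

theorem stmt4 (p f q : ℕ) (hp : p.Prime) (hf : 0 < f) (hq : q = p ^ f)
    (d k : ℕ) (hk : 0 < k) :
    Uset p q d k = ∅ ↔ Lval q p f k < (d : ℚ) := by
  subst hq
  have hp1 := hp.one_lt
  have hN : k < p ^ k := Nat.lt_pow_self hp1
  have hq1 := Nat.one_lt_pow hf.ne' hp1
  have hL : (d : ℚ) ≤ Lval (p ^ f) p f k ↔
      ∀ i, d * (p ^ f - 1) ≤ W p f k (fun j => (Nat.digits p k).getD j 0) i := by
    have hQ : (0 : ℚ) < ((p ^ f : ℕ) : ℚ) - 1 := by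
      rw [sub_pos]; exact_mod_cast hq1
    have hi : ∀ i < f, ((d : ℚ) ≤ ((Nat.digits (p ^ f) (k * p ^ i)).sum : ℚ) /
        (((p ^ f : ℕ) : ℚ) - 1) ↔
        d * (p ^ f - 1) ≤ W p f k (fun j => (Nat.digits p k).getD j 0) i) := by
      intro i hi
      rw [le_div_iff₀ hQ, digits_sum_eq_W hp1 hf k k i hN hi, ← Nat.cast_one,
        ← Nat.cast_sub hq1.le]
      exact_mod_cast Iff.rfl
    refine (Finset.le_inf'_iff (s := Finset.Icc 0 (f - 1)) _ _).trans ?_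
    constructor
    · intro h i
      have hlt := Nat.mod_lt i hf
      rw [← W_mod]
      exact (hi _ hlt).1 (h _ (Finset.mem_Icc.2 ⟨Nat.zero_le _, by omega⟩))
    · intro h i him
      have := (Finset.mem_Icc.1 him).2
      exact (hi i (by omega)).2 (h i)
  rw [← not_le, hL, ← Set.not_nonempty_iff_eq_empty, not_iff_not]
  exact ⟨fun ⟨m, hm⟩ => le_W_of_mem hp1 k hN m hm, exists_mem_of_le_W hp1 hf k hN⟩
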